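/- Let (Φ₁,Φ₂) be a branching mechanism, V the unique solution of the cumulant equations (3.8), and H the moment matrix; suppose all eigenvalues of H have strictly negative real parts. Let Ψ be an immigration mechanism with measure m. Then ∫₀^∞ Ψ(V(s,λ)) ds < ∞ for every λ ∈ [0,∞)² if and only if ∫_{{z∈𝕄 : |z|≥1}} log|z| m(dz) < ∞, where |z| is the Euclidean norm. (This finiteness of ∫₀^∞ Ψ(V(s,λ)) ds is exactly the condition under which the MSBI transition probabilities P^γ_t(x,·) converge to a stationary distribution.) -/

import Mathlib

open MeasureTheory Filter Set

noncomputable section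

/-- The state space `𝕄 = [0,∞) × ℕ`, as a subset of `ℝ²`. -/
def Mset : Set (ℝ × ℝ) := {z | 0 ≤ z.1 ∧ ∃ n : ℕ, z.2 = (n : ℝ)}

/-- The space `𝕄₋₁ = [0,∞) × (ℕ ∪ {-1})`, as a subset of `ℝ²`. -/
def Mm1set : Set (ℝ × ℝ) := {z | 0 ≤ z.1 ∧ ∃ n : ℤ, (-1 : ℤ) ≤ n ∧ z.2 = (n : ℝ)}

/-- The data of a branching mechanism `(Φ₁, Φ₂)` of a mixed state branching process. -/
structure BranchingMechanism where
  a11 : ℝ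
  a21 : ℝ
  alpha : ℝ
  a21_nonneg : 0 ≤ a21
  alpha_nonneg : 0 ≤ alpha
  n1 : Measure (ℝ × ℝ)
  n2 : Measure (ℝ × ℝ)
  n1_sigmaFinite : SigmaFinite n1
  n2_sigmaFinite : SigmaFinite n2
  /-- `n₁` is supported on `𝕄` -/
  n1_supp : n1 Msetᶜ = 0
  /-- `n₂` is supported on `𝕄₋₁` -/
  n2_supp : n2 Mm1setᶜ = 0
  /-- `n₁` does not charge the origin -/
  n1_zero : n1 {0} = 0
  /-- `n₂` does not charge the origin -/
  n2_zero : n2 {0} = 0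
  /-- `n₂([0,∞) × {-1}) < ∞` -/
  n2_neg1 : n2 {z : ℝ × ℝ | z.2 = -1} ≠ ⊤
  /-- `∫ (z₁ ∧ z₁² + z₂) n₁(dz) < ∞` -/
  n1_moment : ∫⁻ z, ENNReal.ofReal (min z.1 (z.1 ^ 2) + z.2) ∂n1 ≠ ⊤
  /-- `∫ (z₁ + |z₂|) n₂(dz) < ∞` -/
  n2_moment : ∫⁻ z, ENNReal.ofReal (z.1 + |z.2|) ∂n2 ≠ ⊤

/-- `Φ₁(λ) = -a₁₁λ₁ - αλ₁² - ∫ (e^{-⟨λ,z⟩} - 1 + λ₁z₁) n₁(dz)`. -/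
def mPhi1 (B : BranchingMechanism) (l : ℝ × ℝ) : ℝ :=
  -B.a11 * l.1 - B.alpha * l.1 ^ 2 -
    ∫ z, (Real.exp (-(l.1 * z.1 + l.2 * z.2)) - 1 + l.1 * z.1) ∂B.n1

/-- `Φ₂(λ) = a₂₁λ₁ + ∫ (1 - e^{-⟨λ,z⟩}) n₂(dz)`. -/
def mPhi2 (B : BranchingMechanism) (l : ℝ × ℝ) : ℝ :=
  B.a21 * l.1 + ∫ z, (1 - Real.exp (-(l.1 * z.1 + l.2 * z.2))) ∂B.n2


/-- `V : t ↦ V(t,λ)` is a continuous `[0,∞)²`-valued solution of the cumulant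
equations (3.8) with initial value `λ = l`. -/
def SolvesCumulant (B : BranchingMechanism) (l : ℝ × ℝ) (V : ℝ → ℝ × ℝ) : Prop :=
  ContinuousOn V (Ici 0) ∧
  (∀ t : ℝ, 0 ≤ t → 0 ≤ (V t).1 ∧ 0 ≤ (V t).2) ∧
  (∀ t : ℝ, 0 ≤ t →
    (V t).1 = l.1 + ∫ s in (0:ℝ)..t, mPhi1 B (V s) ∧
    (V t).2 = l.2 + ∫ s in (0:ℝ)..t, mPhi2 B (V s))

/-- Entries of the moment matrix `H`. -/
def H11 (B : BranchingMechanism) : ℝ := -B.a11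
def H12 (B : BranchingMechanism) : ℝ := ∫ z, z.2 ∂B.n1
def H21 (B : BranchingMechanism) : ℝ := B.a21 + ∫ z, z.1 ∂B.n2
def H22 (B : BranchingMechanism) : ℝ := ∫ z, z.2 ∂B.n2

/-- The moment matrix `H` of a branching mechanism. -/
def Hmat (B : BranchingMechanism) : Matrix (Fin 2) (Fin 2) ℝ :=
  !![H11 B, H12 B; H21 B, H22 B]

/-- The immigration mechanism `Ψ(λ) = bλ₁ + ∫ (1 - e^{-⟨λ,z⟩}) m(dz)`. -/
def mPsi (b : ℝ) (m : Measure (ℝ × ℝ)) (l : ℝ × ℝ) : ℝ :=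
  b * l.1 + ∫ z, (1 - Real.exp (-(l.1 * z.1 + l.2 * z.2))) ∂m

/-!
The moment matrix `H` dominates the branching mechanism: `Φ(λ) ≤ Hλ` on the quadrant. As `H` has
nonnegative off-diagonal entries and is Hurwitz, some positive weights `v` satisfy `vᵀH ≤ -c vᵀ`,
so by Grönwall `V(t, λ)` decays at least exponentially. Conversely `Φᵢ(λ) ≥ -K λᵢ` on bounded sets,
so `V(t, (1, 1))` decays at most exponentially. Hence `⟨V(s, λ), z⟩` may be replaced by
`e^{-cs} (z₁ + z₂)`, and by Tonelli everything reduces to the scalar integral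
`∫₀^∞ (1 - exp (-e^{-cs} r)) ds`, which lies between constant multiples of `log⁺ r` and
`log⁺ r + min 1 r`.
-/

/-! ### The logarithmic moment criterion -/

lemma posLog_mul_le_add_mul_min {a r : ℝ} (ha : 0 ≤ a) (hr : 0 ≤ r) :
    Real.posLog (a * r) ≤ Real.posLog r + a * min 1 r := by
  have posLog_le_self {x : ℝ} (hx : 0 ≤ x) : Real.posLog x ≤ x :=
    max_le hx (Real.log_le_self hx)
  rcases le_total 1 r with h | h
  · rw [min_eq_left h, mul_one]
    linarith [Real.posLog_mul (x := a) (y := r), posLog_le_self ha]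
  · rw [min_eq_right h]
    linarith [posLog_le_self (mul_nonneg ha hr), Real.posLog_nonneg (x := r)]

lemma mul_inv_max_one (r : ℝ) : r * (max 1 r)⁻¹ = min 1 r := by
  rcases le_total 1 r with h | h
  · rw [max_eq_right h, min_eq_left h, mul_inv_cancel₀ (by linarith)]
  · rw [max_eq_left h, min_eq_right h, inv_one, mul_one]

lemma lintegral_one_sub_exp_le {c r : ℝ} (hc : 0 < c) (hr : 0 ≤ r) :
    ∫⁻ s in Ioi (0 : ℝ), ENNReal.ofReal (1 - Real.exp (-(Real.exp (-c * s) * r))) ≤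
      ENNReal.ofReal (c⁻¹ * (Real.posLog r + min 1 r)) := by
  set T := c⁻¹ * Real.posLog r with hT
  have hT0 : 0 ≤ T := mul_nonneg (inv_nonneg.2 hc.le) Real.posLog_nonneg
  have hexpT : Real.exp (-c * T) = (max 1 r)⁻¹ := by
    rw [hT, neg_mul, mul_inv_cancel_left₀ hc.ne', Real.posLog_eq_log_max_one hr, Real.exp_neg,
      Real.exp_log (by positivity)]
  have early : ∫⁻ s in Ioc 0 T, ENNReal.ofReal (1 - Real.exp (-(Real.exp (-c * s) * r))) ≤
      ENNReal.ofReal T := by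
    calc _ ≤ ∫⁻ _ in Ioc 0 T, (1 : ENNReal) := lintegral_mono fun s =>
          ENNReal.ofReal_le_one.2 (sub_le_self _ (Real.exp_pos _).le)
      _ = ENNReal.ofReal T := by simp
  have late : ∫⁻ s in Ioi T, ENNReal.ofReal (1 - Real.exp (-(Real.exp (-c * s) * r))) ≤
      ENNReal.ofReal (c⁻¹ * min 1 r) := by
    have h_int := integrableOn_exp_mul_Ioi (neg_lt_zero.2 hc) T
    calc _ ≤ ∫⁻ s in Ioi T, ENNReal.ofReal (Real.exp (-c * s) * r) := lintegral_mono fun s =>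
          ENNReal.ofReal_le_ofReal (by linarith [Real.one_sub_le_exp_neg (Real.exp (-c * s) * r)])
      _ = ENNReal.ofReal (Real.exp (-c * T) / c * r) := by
          rw [← ofReal_integral_eq_lintegral_ofReal (h_int.mul_const r)
            (Eventually.of_forall fun s => by positivity), integral_mul_const,
            integral_exp_mul_Ioi (neg_lt_zero.2 hc), neg_div_neg_eq]
      _ = ENNReal.ofReal (c⁻¹ * min 1 r) := by
          rw [hexpT, ← mul_inv_max_one r]; ring_nf
  rw [← Ioc_union_Ioi_eq_Ioi hT0, mul_add,
    ENNReal.ofReal_add hT0 (mul_nonneg (inv_nonneg.2 hc.le) (le_min zero_le_one hr))]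
  exact (lintegral_union_le _ _ _).trans (add_le_add early late)

lemma one_sub_exp_neg_one_pos : 0 < 1 - Real.exp (-1) :=
  sub_pos.2 (Real.exp_lt_one_iff.2 (by norm_num))

lemma mul_posLog_le_lintegral_one_sub_exp {c r : ℝ} (hc : 0 < c) (hr : 0 ≤ r) :
    ENNReal.ofReal ((1 - Real.exp (-1)) * c⁻¹ * Real.posLog r) ≤
      ∫⁻ s in Ioi (0 : ℝ), ENNReal.ofReal (1 - Real.exp (-(Real.exp (-c * s) * r))) := by
  rcases le_total r 1 with h | h
  · simp [(Real.posLog_eq_zero_iff r).2 (abs_le.2 ⟨by linarith, h⟩)]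
  set T := c⁻¹ * Real.posLog r with hT
  have one_le {s : ℝ} (hs : s ≤ T) : 1 ≤ Real.exp (-c * s) * r := by
    have hlog : c * s ≤ Real.log r := by
      rw [← Real.posLog_eq_log (h.trans (le_abs_self r))]
      exact (le_inv_mul_iff₀ hc).1 hs
    calc (1 : ℝ) ≤ Real.exp (-c * s + Real.log r) := Real.one_le_exp (by linarith)
      _ = Real.exp (-c * s) * r := by rw [Real.exp_add, Real.exp_log (by linarith)]
  calc _ = ∫⁻ _ in Ioc 0 T, ENNReal.ofReal (1 - Real.exp (-1)) := by
        simp [mul_assoc, ← hT, ENNReal.ofReal_mul one_sub_exp_neg_one_pos.le]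
    _ ≤ ∫⁻ s in Ioc 0 T, ENNReal.ofReal (1 - Real.exp (-(Real.exp (-c * s) * r))) :=
        setLIntegral_mono' measurableSet_Ioc fun s hs => by
          have := one_le hs.2
          gcongr
    _ ≤ _ := lintegral_mono_set Ioc_subset_Ioi_self

section LogMoment

variable {α : Type*} [MeasurableSpace α] {μ : Measure α}

lemma setLIntegral_log_eq_lintegral_posLog {f : α → ℝ} (hf : Measurable f) (hf0 : ∀ x, 0 ≤ f x) :
    ∫⁻ x in {x | 1 ≤ f x}, ENNReal.ofReal (Real.log (f x)) ∂μ =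
      ∫⁻ x, ENNReal.ofReal (Real.posLog (f x)) ∂μ := by
  rw [← lintegral_indicator (measurableSet_le measurable_const hf)]
  refine lintegral_congr fun x => ?_
  by_cases hx : 1 ≤ f x
  · rw [indicator_of_mem (by exact hx), Real.posLog_eq_log (hx.trans (le_abs_self _))]
  · rw [indicator_of_notMem (by exact hx), (Real.posLog_eq_zero_iff _).2
      (abs_le.2 ⟨by linarith [hf0 x], (not_le.1 hx).le⟩), ENNReal.ofReal_zero]

lemma integrable_min_one_of_le_mul {f g : α → ℝ} {a : ℝ}
    (hfm : AEStronglyMeasurable f μ) (hf : ∀ᵐ x ∂μ, 0 ≤ f x) (hg : ∀ᵐ x ∂μ, 0 ≤ g x)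
    (hfg : ∀ᵐ x ∂μ, f x ≤ a * g x) (hmin : Integrable (fun x => min 1 (g x)) μ) :
    Integrable (fun x => min 1 (f x)) μ := by
  refine (hmin.const_mul (max 1 a)).mono' (aestronglyMeasurable_const.inf hfm) ?_
  filter_upwards [hf, hg, hfg] with x hfx hgx hfgx
  rw [Real.norm_of_nonneg (le_min zero_le_one hfx), mul_min_of_nonneg _ _ (by positivity), mul_one]
  exact min_le_min (le_max_left 1 a)
    (hfgx.trans (mul_le_mul_of_nonneg_right (le_max_right 1 a) hgx))

lemma lintegral_posLog_ne_top_of_le_mul {f g : α → ℝ} {a : ℝ} (ha : 0 ≤ a)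
    (hf : ∀ᵐ x ∂μ, 0 ≤ f x) (hg : ∀ᵐ x ∂μ, 0 ≤ g x) (hfg : ∀ᵐ x ∂μ, f x ≤ a * g x)
    (hmin : Integrable (fun x => min 1 (g x)) μ)
    (hlog : ∫⁻ x, ENNReal.ofReal (Real.posLog (g x)) ∂μ ≠ ⊤) :
    ∫⁻ x, ENNReal.ofReal (Real.posLog (f x)) ∂μ ≠ ⊤ := by
  have hmin' := hmin.const_mul a
  have bound : ∀ᵐ x ∂μ, ENNReal.ofReal (Real.posLog (f x)) ≤
      ENNReal.ofReal (Real.posLog (g x)) + ENNReal.ofReal (a * min 1 (g x)) := by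
    filter_upwards [hf, hg, hfg] with x hfx hgx hfgx
    exact (ENNReal.ofReal_le_ofReal ((Real.posLog_le_posLog hfx hfgx).trans
      (posLog_mul_le_add_mul_min ha hgx))).trans ENNReal.ofReal_add_le
  refine ne_top_of_le_ne_top ?_ (lintegral_mono_ae bound)
  rw [lintegral_add_right' _ hmin'.aestronglyMeasurable.aemeasurable.ennreal_ofReal]
  exact ENNReal.add_ne_top.2 ⟨hlog, hmin'.lintegral_lt_top.ne⟩

theorem lintegral_lintegral_one_sub_exp_ne_top_iff [SFinite μ] {c : ℝ} (hc : 0 < c) {f : α → ℝ}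
    (hf : Measurable f) (hf0 : ∀ᵐ x ∂μ, 0 ≤ f x) (hmin : Integrable (fun x => min 1 (f x)) μ) :
    ∫⁻ s in Ioi (0 : ℝ), ∫⁻ x, ENNReal.ofReal (1 - Real.exp (-(Real.exp (-c * s) * f x))) ∂μ ≠ ⊤ ↔
      ∫⁻ x, ENNReal.ofReal (Real.posLog (f x)) ∂μ ≠ ⊤ := by
  rw [lintegral_lintegral_swap (by unfold Function.uncurry; fun_prop)]
  have hlogm : Measurable fun x => ENNReal.ofReal (Real.posLog (f x)) := by fun_prop
  constructor
  · have hk : 0 < (1 - Real.exp (-1)) * c⁻¹ := mul_pos one_sub_exp_neg_one_pos (inv_pos.2 hc)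
    intro hfin htop
    refine hfin (top_le_iff.1 ?_)
    calc ⊤ = ∫⁻ x, ENNReal.ofReal ((1 - Real.exp (-1)) * c⁻¹ * Real.posLog (f x)) ∂μ := by
          simp_rw [ENNReal.ofReal_mul hk.le]
          rw [lintegral_const_mul _ hlogm, htop,
            ENNReal.mul_top (ENNReal.ofReal_pos.2 hk).ne']
      _ ≤ _ := lintegral_mono_ae (hf0.mono fun x => mul_posLog_le_lintegral_one_sub_exp hc)
  · intro hlog
    refine ne_top_of_le_ne_top ?_
      (lintegral_mono_ae (hf0.mono fun x => lintegral_one_sub_exp_le hc))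
    have hc' : 0 ≤ c⁻¹ := (inv_pos.2 hc).le
    have split : ∀ᵐ x ∂μ, ENNReal.ofReal (c⁻¹ * (Real.posLog (f x) + min 1 (f x))) =
        ENNReal.ofReal c⁻¹ *
          (ENNReal.ofReal (Real.posLog (f x)) + ENNReal.ofReal (min 1 (f x))) := by
      filter_upwards [hf0] with x hx
      rw [ENNReal.ofReal_mul hc', ENNReal.ofReal_add Real.posLog_nonneg (le_min zero_le_one hx)]
    rw [lintegral_congr_ae split, lintegral_const_mul' _ _ ENNReal.ofReal_ne_top,
      lintegral_add_left hlogm]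
    exact ENNReal.mul_ne_top ENNReal.ofReal_ne_top
      (ENNReal.add_ne_top.2 ⟨hlog, hmin.lintegral_lt_top.ne⟩)

end LogMoment

/-! ### Grönwall estimates and integrals depending on a parameter -/

lemma le_mul_exp_of_hasDerivWithinAt_le {f f' : ℝ → ℝ} {k t : ℝ}
    (hf : ∀ s, 0 ≤ s → HasDerivWithinAt f (f' s) (Ici 0) s)
    (hle : ∀ s, 0 ≤ s → f' s ≤ k * f s) (ht : 0 ≤ t) : f t ≤ f 0 * Real.exp (k * t) := by
  have hright {s : ℝ} (hs : 0 ≤ s) : HasDerivWithinAt f (f' s) (Ici s) s :=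
    (hf s hs).mono (Ici_subset_Ici.2 hs)
  have h := le_gronwallBound_of_liminf_deriv_right_le (ε := 0)
    (fun s hs => (hf s hs.1).continuousWithinAt.mono Icc_subset_Ici_self)
    (fun s hs r hr => (hright hs.1).liminf_right_slope_le hr) le_rfl
    (fun s hs => by simpa using hle s hs.1) t ⟨ht, le_rfl⟩
  rwa [gronwallBound_ε0, sub_zero] at h

lemma mul_exp_le_of_le_hasDerivWithinAt {f f' : ℝ → ℝ} {k t : ℝ}
    (hf : ∀ s, 0 ≤ s → HasDerivWithinAt f (f' s) (Ici 0) s)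
    (hle : ∀ s, 0 ≤ s → k * f s ≤ f' s) (ht : 0 ≤ t) : f 0 * Real.exp (k * t) ≤ f t := by
  have h := le_mul_exp_of_hasDerivWithinAt_le (f := fun s => -f s) (k := k)
    (fun s hs => (hf s hs).fun_neg) (fun s hs => by linarith [hle s hs]) ht
  linarith

lemma hasDerivWithinAt_of_eq_add_integral {E : Type*} [NormedAddCommGroup E] [NormedSpace ℝ E]
    [CompleteSpace E] {f g : ℝ → E} {a : E} {t : ℝ} (hg : ContinuousOn g (Ici 0))
    (hf : ∀ t, 0 ≤ t → f t = a + ∫ s in (0 : ℝ)..t, g s) (ht : 0 ≤ t) :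
    HasDerivWithinAt f (g t) (Ici 0) t := by
  have hG : Continuous fun s => g (max s 0) :=
    hg.comp_continuous (by fun_prop) fun s => le_max_right s 0
  have hderiv := ((hG.integral_hasStrictDerivAt 0 t).hasDerivAt.const_add a).hasDerivWithinAt
    (s := Ici 0)
  rw [max_eq_left ht] at hderiv
  have hfG (u : ℝ) (hu : 0 ≤ u) : f u = a + ∫ s in (0 : ℝ)..u, g (max s 0) := by
    rw [hf u hu]
    congr 1
    refine intervalIntegral.integral_congr fun s hs => ?_
    rw [uIcc_of_le hu] at hs
    simp only [max_eq_left hs.1]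
  exact hderiv.congr hfG (hfG t ht)

lemma continuousOn_integral_of_norm_le_mul {X α E : Type*} [TopologicalSpace X]
    [FirstCountableTopology X] [MeasurableSpace α] {μ : Measure α} [NormedAddCommGroup E]
    [NormedSpace ℝ E] {s : Set X} {F : X → α → E} {g : X → ℝ} {w : α → ℝ}
    (hF : ∀ a, ContinuousOn (fun x => F x a) s) (hFm : ∀ x, AEStronglyMeasurable (F x) μ)
    (hg : ContinuousOn g s) (hw : Integrable w μ)
    (hle : ∀ x ∈ s, ∀ᵐ a ∂μ, ‖F x a‖ ≤ g x * w a) :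
    ContinuousOn (fun x => ∫ a, F x a ∂μ) s := by
  intro x hx
  have hgx : ∀ᶠ y in nhdsWithin x s, |g y| < |g x| + 1 :=
    (hg x hx).abs.eventually_lt_const (lt_add_one _)
  refine continuousWithinAt_of_dominated (bound := fun a => (|g x| + 1) * |w a|)
    (Eventually.of_forall hFm) ?_ (hw.abs.const_mul _) (Eventually.of_forall fun a => hF a x hx)
  filter_upwards [hgx, self_mem_nhdsWithin] with y hgy hy
  filter_upwards [hle y hy] with a ha
  calc ‖F y a‖ ≤ |g y * w a| := ha.trans (le_abs_self _)
    _ = |g y| * |w a| := abs_mul _ _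
    _ ≤ (|g x| + 1) * |w a| := by gcongr

lemma integrable_and_integrable_of_lintegral_add_ne_top {α : Type*} [MeasurableSpace α]
    {μ : Measure α} {f g : α → ℝ} (hfm : AEStronglyMeasurable f μ) (hgm : AEStronglyMeasurable g μ)
    (hf : ∀ᵐ x ∂μ, 0 ≤ f x) (hg : ∀ᵐ x ∂μ, 0 ≤ g x)
    (h : ∫⁻ x, ENNReal.ofReal (f x + g x) ∂μ ≠ ⊤) : Integrable f μ ∧ Integrable g μ := by
  have hfg : Integrable (fun x => f x + g x) μ := by
    refine (lintegral_ofReal_ne_top_iff_integrable (hfm.add hgm) ?_).1 h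
    filter_upwards [hf, hg] with x hfx hgx using add_nonneg hfx hgx
  refine ⟨hfg.mono' hfm ?_, hfg.mono' hgm ?_⟩ <;> filter_upwards [hf, hg] with x hfx hgx
  · rw [Real.norm_of_nonneg hfx]; linarith
  · rw [Real.norm_of_nonneg hgx]; linarith

/-! ### Nonnegative off-diagonal Hurwitz matrices -/

section Matrix

variable {A : Matrix (Fin 2) (Fin 2) ℝ}

lemma trace_neg_and_det_pos_of_hurwitz (h : 0 ≤ A 0 1 * A 1 0)
    (hA : ∀ μ ∈ spectrum ℂ (A.map (Complex.ofReal ·)), μ.re < 0) :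
    A.trace < 0 ∧ 0 < A.det := by
  set d := Real.sqrt ((A 0 0 - A 1 1) ^ 2 + 4 * (A 0 1 * A 1 0))
  have hd0 : 0 ≤ d := Real.sqrt_nonneg _
  have hd2 : d ^ 2 = (A 0 0 - A 1 1) ^ 2 + 4 * (A 0 1 * A 1 0) := Real.sq_sqrt (by positivity)
  set r := (A 0 0 + A 1 1 + d) / 2 with hr
  have hroot : (r - A 0 0) * (r - A 1 1) - A 0 1 * A 1 0 = 0 := by rw [hr]; linarith
  have hmem : (r : ℂ) ∈ spectrum ℂ (A.map (Complex.ofReal ·)) := by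
    have hdet : (algebraMap ℂ (Matrix (Fin 2) (Fin 2) ℂ) r - A.map (Complex.ofReal ·)).det =
        (((r - A 0 0) * (r - A 1 1) - A 0 1 * A 1 0 : ℝ) : ℂ) := by
      simp [Matrix.det_fin_two, Matrix.algebraMap_matrix_apply]
    rw [spectrum.mem_iff, Matrix.isUnit_iff_isUnit_det, hdet, hroot]
    simp
  have hlt : d < -(A 0 0 + A 1 1) := by
    have := hA _ hmem
    rw [Complex.ofReal_re] at this
    linarith
  rw [Matrix.trace_fin_two, Matrix.det_fin_two]
  exact ⟨by linarith, by nlinarith⟩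

lemma exists_pos_vecMul_le_of_hurwitz (h01 : 0 ≤ A 0 1) (h10 : 0 ≤ A 1 0)
    (hA : ∀ μ ∈ spectrum ℂ (A.map (Complex.ofReal ·)), μ.re < 0) :
    ∃ v : Fin 2 → ℝ, ∃ c : ℝ, 0 < c ∧ (∀ i, 0 < v i) ∧ Matrix.vecMul v A ≤ -c • v := by
  have hoff : 0 ≤ A 0 1 * A 1 0 := mul_nonneg h01 h10
  obtain ⟨htr, hdet⟩ := trace_neg_and_det_pos_of_hurwitz hoff hA
  rw [Matrix.trace_fin_two] at htr
  rw [Matrix.det_fin_two] at hdet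
  have h00 : A 0 0 < 0 := by nlinarith
  have h11 : A 1 1 < 0 := by nlinarith
  -- minus the column sums of the adjugate of `A`, so that `vᵀA = -det A (1, 1)`
  set v : Fin 2 → ℝ := ![A 1 0 - A 1 1, A 0 1 - A 0 0] with hv
  have hv0 : 0 < v 0 := by simp only [hv, Matrix.cons_val_zero]; linarith
  have hv1 : 0 < v 1 := by simp only [hv, Matrix.cons_val_one, Matrix.cons_val_fin_one]; linarith
  set c := (A 0 0 * A 1 1 - A 0 1 * A 1 0) / (v 0 + v 1) with hc
  have hc0 : 0 < c := by positivity
  have hcv : c * v 0 + c * v 1 = A 0 0 * A 1 1 - A 0 1 * A 1 0 := by rw [hc]; field_simp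
  have hcv0 := mul_pos hc0 hv0
  have hcv1 := mul_pos hc0 hv1
  have hvA (j : Fin 2) : Matrix.vecMul v A j = -(A 0 0 * A 1 1 - A 0 1 * A 1 0) := by
    rw [Matrix.vecMul_eq_sum]
    fin_cases j <;> simp [hv] <;> ring
  refine ⟨v, c, hc0, Fin.forall_fin_two.2 ⟨hv0, hv1⟩, Fin.forall_fin_two.2 ⟨?_, ?_⟩⟩ <;>
  · rw [hvA, Pi.smul_apply, smul_eq_mul]
    linarith

end Matrix

/-! ### Bounds on the branching mechanism -/

/-- The integrand `e^{-⟨λ,z⟩} - 1 + λ₁z₁` of `Φ₁`. -/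
def compensatedKernel (l z : ℝ × ℝ) : ℝ := Real.exp (-(l.1 * z.1 + l.2 * z.2)) - 1 + l.1 * z.1

/-- The integrand `1 - e^{-⟨λ,z⟩}` shared by `Φ₂` and `Ψ`. -/
def bernsteinKernel (l z : ℝ × ℝ) : ℝ := 1 - Real.exp (-(l.1 * z.1 + l.2 * z.2))

@[fun_prop]
lemma continuous_compensatedKernel :
    Continuous fun p : (ℝ × ℝ) × (ℝ × ℝ) => compensatedKernel p.1 p.2 := by
  unfold compensatedKernel; fun_prop

@[fun_prop]
lemma continuous_bernsteinKernel :
    Continuous fun p : (ℝ × ℝ) × (ℝ × ℝ) => bernsteinKernel p.1 p.2 := by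
  unfold bernsteinKernel; fun_prop

section Kernels

variable {l z : ℝ × ℝ}

lemma exp_neg_sub_one_add_le_sq {x : ℝ} (hx : 0 ≤ x) : Real.exp (-x) - 1 + x ≤ x ^ 2 := by
  have hexp : Real.exp (-x) ≤ (1 + x)⁻¹ := by
    rw [Real.exp_neg]
    exact inv_anti₀ (by linarith) (by linarith [Real.add_one_le_exp x])
  have hinv : (1 + x)⁻¹ ≤ 1 - x + x ^ 2 := by
    rw [inv_le_iff_one_le_mul₀ (by linarith)]
    nlinarith [pow_nonneg hx 3]
  linarith

lemma min_mul_sq_le {a x : ℝ} (ha : 0 ≤ a) (hx : 0 ≤ x) :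
    min (a * x) ((a * x) ^ 2) ≤ a * (1 + a) * min x (x ^ 2) := by
  rw [mul_min_of_nonneg _ _ (by positivity)]
  refine min_le_min ?_ ?_
  · nlinarith [mul_nonneg (sq_nonneg a) hx]
  · nlinarith [mul_nonneg ha (sq_nonneg x)]

lemma neg_mul_snd_le_compensatedKernel : -(l.2 * z.2) ≤ compensatedKernel l z := by
  unfold compensatedKernel
  linarith [Real.one_sub_le_exp_neg (l.1 * z.1 + l.2 * z.2)]

lemma compensatedKernel_le (hl : 0 ≤ l) (hz : 0 ≤ z) :
    compensatedKernel l z ≤ l.1 * (1 + l.1) * min z.1 (z.1 ^ 2) := by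
  have h1 : 0 ≤ l.1 * z.1 := mul_nonneg hl.1 hz.1
  have h2 : 0 ≤ l.2 * z.2 := mul_nonneg hl.2 hz.2
  have hdrop : compensatedKernel l z ≤ Real.exp (-(l.1 * z.1)) - 1 + l.1 * z.1 := by
    unfold compensatedKernel
    gcongr
    linarith
  refine hdrop.trans ((le_min ?_ (exp_neg_sub_one_add_le_sq h1)).trans (min_mul_sq_le hl.1 hz.1))
  linarith [Real.exp_le_one_iff.2 (neg_nonpos.2 h1)]

lemma norm_compensatedKernel_le (hl : 0 ≤ l) (hz : 0 ≤ z) :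
    ‖compensatedKernel l z‖ ≤ (l.1 * (1 + l.1) + l.2) * (min z.1 (z.1 ^ 2) + z.2) := by
  have hl1 : 0 ≤ l.1 := hl.1
  have hl2 : 0 ≤ l.2 := hl.2
  have hz2 : 0 ≤ z.2 := hz.2
  have hmin : 0 ≤ min z.1 (z.1 ^ 2) := le_min hz.1 (sq_nonneg _)
  have h1 : 0 ≤ l.1 * (1 + l.1) := by positivity
  have hupper := compensatedKernel_le hl hz
  have hlower := neg_mul_snd_le_compensatedKernel (l := l) (z := z)
  rw [Real.norm_eq_abs, abs_le]
  constructor <;>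
    nlinarith [mul_nonneg h1 hmin, mul_nonneg h1 hz2, mul_nonneg hl2 hmin, mul_nonneg hl2 hz2]

lemma bernsteinKernel_le : bernsteinKernel l z ≤ l.1 * z.1 + l.2 * z.2 := by
  unfold bernsteinKernel
  linarith [Real.one_sub_le_exp_neg (l.1 * z.1 + l.2 * z.2)]

lemma bernsteinKernel_nonneg (hl : 0 ≤ l) (hz : 0 ≤ z) : 0 ≤ bernsteinKernel l z := by
  have : 0 ≤ l.1 * z.1 + l.2 * z.2 := add_nonneg (mul_nonneg hl.1 hz.1) (mul_nonneg hl.2 hz.2)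
  exact sub_nonneg.2 (Real.exp_le_one_iff.2 (neg_nonpos.2 this))

/- On `𝕄₋₁` the kernel is negative only where `z₂ = -1`, and there it is at least `1 - e^{λ₂}`. -/
lemma neg_mul_abs_snd_le_bernsteinKernel (hl : 0 ≤ l) (hz : z ∈ Mm1set) :
    -(l.2 * Real.exp l.2 * |z.2|) ≤ bernsteinKernel l z := by
  obtain ⟨hz1, n, hn, hzn⟩ := hz
  obtain ⟨hl1, hl2⟩ : 0 ≤ l.1 ∧ 0 ≤ l.2 := hl
  rcases hn.eq_or_lt with rfl | hn
  · have hz2 : z.2 = -1 := by simp [hzn]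
    have hdrop : Real.exp (-(l.1 * z.1 + l.2 * z.2)) ≤ Real.exp l.2 := by
      gcongr
      rw [hz2]
      linarith [mul_nonneg hl1 hz1]
    have hconvex : Real.exp l.2 - 1 ≤ l.2 * Real.exp l.2 := by
      have : Real.exp l.2 * Real.exp (-l.2) = 1 := by rw [← Real.exp_add]; simp
      nlinarith [Real.one_sub_le_exp_neg l.2, Real.exp_pos l.2]
    rw [hz2, abs_neg, abs_one, mul_one]
    unfold bernsteinKernel
    linarith
  · have hz2 : 0 ≤ z.2 := by rw [hzn]; exact_mod_cast (by omega : 0 ≤ n)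
    exact (neg_nonpos.2 (by positivity)).trans (bernsteinKernel_nonneg ⟨hl1, hl2⟩ ⟨hz1, hz2⟩)

lemma norm_bernsteinKernel_le (hl : 0 ≤ l) (hz : z ∈ Mm1set) :
    ‖bernsteinKernel l z‖ ≤ (l.1 + l.2 * Real.exp l.2) * (z.1 + |z.2|) := by
  have hl1 : 0 ≤ l.1 := hl.1
  have hl2 : 0 ≤ l.2 := hl.2
  have h2 : 0 ≤ l.2 * Real.exp l.2 := by positivity
  have hupper : bernsteinKernel l z ≤ l.1 * z.1 + l.2 * Real.exp l.2 * |z.2| :=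
    calc bernsteinKernel l z ≤ l.1 * z.1 + l.2 * |z.2| := bernsteinKernel_le.trans <| by
          gcongr
          exact le_abs_self _
      _ ≤ l.1 * z.1 + l.2 * Real.exp l.2 * |z.2| := by
          gcongr
          exact le_mul_of_one_le_right hl2 (Real.one_le_exp hl2)
  have hlower := neg_mul_abs_snd_le_bernsteinKernel hl hz
  rw [Real.norm_eq_abs, abs_le]
  constructor <;>
    nlinarith [mul_nonneg hl1 hz.1, mul_nonneg hl1 (abs_nonneg z.2), mul_nonneg h2 hz.1]

end Kernels

lemma nonneg_of_mem_Mset {z : ℝ × ℝ} (hz : z ∈ Mset) : 0 ≤ z := by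
  obtain ⟨hz1, n, hn⟩ := hz
  exact ⟨hz1, hn.symm ▸ n.cast_nonneg⟩

namespace BranchingMechanism

variable (B : BranchingMechanism) {l : ℝ × ℝ}

lemma ae_n1_nonneg : ∀ᵐ z ∂B.n1, 0 ≤ z :=
  Eventually.mono (mem_ae_iff.2 B.n1_supp) fun _ => nonneg_of_mem_Mset

lemma ae_n2_mem_Mm1set : ∀ᵐ z ∂B.n2, z ∈ Mm1set := mem_ae_iff.2 B.n2_supp

lemma integrable_n1 :
    Integrable (fun z => min z.1 (z.1 ^ 2)) B.n1 ∧ Integrable (fun z => z.2) B.n1 := by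
  refine integrable_and_integrable_of_lintegral_add_ne_top (by fun_prop) (by fun_prop) ?_ ?_
    B.n1_moment <;> filter_upwards [B.ae_n1_nonneg] with z hz
  · exact le_min hz.1 (sq_nonneg _)
  · exact hz.2

lemma integrable_n2 :
    Integrable (fun z => z.1) B.n2 ∧ Integrable (fun z => |z.2|) B.n2 :=
  integrable_and_integrable_of_lintegral_add_ne_top (by fun_prop) (by fun_prop)
    (B.ae_n2_mem_Mm1set.mono fun _ hz => hz.1) (Eventually.of_forall fun _ => abs_nonneg _)
    B.n2_moment

lemma integrable_snd_n2 : Integrable (fun z => z.2) B.n2 :=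
  B.integrable_n2.2.mono (by fun_prop) (Eventually.of_forall fun z => (abs_abs z.2).ge)

lemma integrable_compensatedKernel (hl : 0 ≤ l) : Integrable (compensatedKernel l) B.n1 :=
  ((B.integrable_n1.1.add B.integrable_n1.2).const_mul _).mono' (by fun_prop)
    (B.ae_n1_nonneg.mono fun _ => norm_compensatedKernel_le hl)

lemma integrable_bernsteinKernel (hl : 0 ≤ l) : Integrable (bernsteinKernel l) B.n2 :=
  ((B.integrable_n2.1.add B.integrable_n2.2).const_mul _).mono' (by fun_prop)
    (B.ae_n2_mem_Mm1set.mono fun _ => norm_bernsteinKernel_le hl)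

lemma mPhi1_eq (l : ℝ × ℝ) :
    mPhi1 B l = -B.a11 * l.1 - B.alpha * l.1 ^ 2 - ∫ z, compensatedKernel l z ∂B.n1 := rfl

lemma mPhi2_eq (l : ℝ × ℝ) : mPhi2 B l = B.a21 * l.1 + ∫ z, bernsteinKernel l z ∂B.n2 := rfl

lemma continuousOn_mPhi1 : ContinuousOn (mPhi1 B) (Ici 0) := by
  have h_int : ContinuousOn (fun l => ∫ z, compensatedKernel l z ∂B.n1) (Ici 0) :=
    continuousOn_integral_of_norm_le_mul (fun z => by fun_prop) (fun l => by fun_prop)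
      (by fun_prop) (B.integrable_n1.1.add B.integrable_n1.2)
      fun l hl => B.ae_n1_nonneg.mono fun _ => norm_compensatedKernel_le hl
  exact ContinuousOn.sub (by fun_prop) h_int

lemma continuousOn_mPhi2 : ContinuousOn (mPhi2 B) (Ici 0) := by
  have h_int : ContinuousOn (fun l => ∫ z, bernsteinKernel l z ∂B.n2) (Ici 0) :=
    continuousOn_integral_of_norm_le_mul (fun z => by fun_prop) (fun l => by fun_prop)
      (by fun_prop) (B.integrable_n2.1.add B.integrable_n2.2)
      fun l hl => B.ae_n2_mem_Mm1set.mono fun _ => norm_bernsteinKernel_le hl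
  exact ContinuousOn.add (by fun_prop) h_int

lemma mPhi1_le (hl : 0 ≤ l) : mPhi1 B l ≤ H11 B * l.1 + H12 B * l.2 := by
  have h_int : ∫ z, -(l.2 * z.2) ∂B.n1 ≤ ∫ z, compensatedKernel l z ∂B.n1 :=
    integral_mono (B.integrable_n1.2.const_mul _).neg (B.integrable_compensatedKernel hl)
      fun _ => neg_mul_snd_le_compensatedKernel
  rw [integral_neg, integral_const_mul] at h_int
  rw [mPhi1_eq, H11, H12]
  linarith [mul_nonneg B.alpha_nonneg (sq_nonneg l.1)]

lemma mPhi2_le (hl : 0 ≤ l) : mPhi2 B l ≤ H21 B * l.1 + H22 B * l.2 := by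
  have h1 := B.integrable_n2.1.const_mul l.1
  have h2 := B.integrable_snd_n2.const_mul l.2
  have h_int : ∫ z, bernsteinKernel l z ∂B.n2 ≤ ∫ z, (l.1 * z.1 + l.2 * z.2) ∂B.n2 :=
    integral_mono (B.integrable_bernsteinKernel hl) (h1.add h2) fun _ => bernsteinKernel_le
  rw [integral_add h1 h2, integral_const_mul, integral_const_mul] at h_int
  rw [mPhi2_eq, H21, H22]
  linarith

lemma le_mPhi1 (hl : 0 ≤ l) :
    -(B.a11 + B.alpha * l.1 + (1 + l.1) * ∫ z, min z.1 (z.1 ^ 2) ∂B.n1) * l.1 ≤ mPhi1 B l := by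
  have h_int : ∫ z, compensatedKernel l z ∂B.n1 ≤
      ∫ z, l.1 * (1 + l.1) * min z.1 (z.1 ^ 2) ∂B.n1 :=
    integral_mono_ae (B.integrable_compensatedKernel hl) (B.integrable_n1.1.const_mul _)
      (B.ae_n1_nonneg.mono fun _ => compensatedKernel_le hl)
  rw [integral_const_mul] at h_int
  rw [mPhi1_eq]
  linarith

lemma le_mPhi2 (hl : 0 ≤ l) : -(Real.exp l.2 * ∫ z, |z.2| ∂B.n2) * l.2 ≤ mPhi2 B l := by
  have h_int : ∫ z, -(l.2 * Real.exp l.2 * |z.2|) ∂B.n2 ≤ ∫ z, bernsteinKernel l z ∂B.n2 :=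
    integral_mono_ae (B.integrable_n2.2.const_mul _).neg (B.integrable_bernsteinKernel hl)
      (B.ae_n2_mem_Mm1set.mono fun _ => neg_mul_abs_snd_le_bernsteinKernel hl)
  rw [integral_neg, integral_const_mul] at h_int
  have ha21 : 0 ≤ B.a21 * l.1 := mul_nonneg B.a21_nonneg hl.1
  rw [mPhi2_eq]
  linarith

lemma exists_neg_mul_le_of_fst_add_snd_le (M : ℝ) :
    ∃ K : ℝ, 0 < K ∧ ∀ l : ℝ × ℝ, 0 ≤ l → l.1 + l.2 ≤ M →
      -K * l.1 ≤ mPhi1 B l ∧ -K * l.2 ≤ mPhi2 B l := by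
  set κ₁ := ∫ z, min z.1 (z.1 ^ 2) ∂B.n1
  set κ₂ := ∫ z, |z.2| ∂B.n2
  have hκ₁ : 0 ≤ κ₁ :=
    integral_nonneg_of_ae (B.ae_n1_nonneg.mono fun _ hz => le_min hz.1 (sq_nonneg _))
  have hκ₂ : 0 ≤ κ₂ := integral_nonneg fun _ => abs_nonneg _
  have hα := B.alpha_nonneg
  set K₁ := |B.a11| + B.alpha * |M| + (1 + |M|) * κ₁
  set K₂ := Real.exp |M| * κ₂
  have hK₁ : 0 ≤ K₁ := by positivity
  have hK₂ : 0 ≤ K₂ := mul_nonneg (Real.exp_pos _).le hκ₂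
  refine ⟨K₁ + K₂ + 1, by positivity, fun l hl hlM => ?_⟩
  have hl1 : 0 ≤ l.1 := hl.1
  have hl2 : 0 ≤ l.2 := hl.2
  constructor
  · refine (mul_le_mul_of_nonneg_right (neg_le_neg ?_) hl1).trans (B.le_mPhi1 hl)
    have hlM1 : l.1 ≤ |M| := by linarith [le_abs_self M]
    calc B.a11 + B.alpha * l.1 + (1 + l.1) * κ₁
        ≤ |B.a11| + B.alpha * |M| + (1 + |M|) * κ₁ := by
          gcongr
          exact le_abs_self _
      _ ≤ K₁ + K₂ + 1 := by linarith
  · refine (mul_le_mul_of_nonneg_right (neg_le_neg ?_) hl2).trans (B.le_mPhi2 hl)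
    have hlM2 : l.2 ≤ |M| := by linarith [le_abs_self M]
    calc Real.exp l.2 * κ₂ ≤ Real.exp |M| * κ₂ := by gcongr
      _ ≤ K₁ + K₂ + 1 := by linarith

lemma H12_nonneg : 0 ≤ H12 B :=
  integral_nonneg_of_ae (B.ae_n1_nonneg.mono fun _ hz => hz.2)

lemma H21_nonneg : 0 ≤ H21 B :=
  add_nonneg B.a21_nonneg (integral_nonneg_of_ae (B.ae_n2_mem_Mm1set.mono fun _ hz => hz.1))

end BranchingMechanism

/-! ### Exponential bounds on the cumulant flow -/

namespace SolvesCumulant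

variable {B : BranchingMechanism} {l : ℝ × ℝ} {U : ℝ → ℝ × ℝ} {t : ℝ}

lemma nonneg (hU : SolvesCumulant B l U) (ht : 0 ≤ t) : 0 ≤ U t := hU.2.1 t ht

lemma apply_zero (hU : SolvesCumulant B l U) : U 0 = l :=
  Prod.ext (by simpa using (hU.2.2 0 le_rfl).1) (by simpa using (hU.2.2 0 le_rfl).2)

lemma hasDerivWithinAt_fst (hU : SolvesCumulant B l U) (ht : 0 ≤ t) :
    HasDerivWithinAt (fun s => (U s).1) (mPhi1 B (U t)) (Ici 0) t :=
  hasDerivWithinAt_of_eq_add_integral (g := fun s => mPhi1 B (U s))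
    (B.continuousOn_mPhi1.comp hU.1 hU.2.1) (fun s hs => (hU.2.2 s hs).1) ht

lemma hasDerivWithinAt_snd (hU : SolvesCumulant B l U) (ht : 0 ≤ t) :
    HasDerivWithinAt (fun s => (U s).2) (mPhi2 B (U t)) (Ici 0) t :=
  hasDerivWithinAt_of_eq_add_integral (g := fun s => mPhi2 B (U s))
    (B.continuousOn_mPhi2.comp hU.1 hU.2.1) (fun s hs => (hU.2.2 s hs).2) ht

lemma weighted_sum_le_mul_exp (hU : SolvesCumulant B l U) {v : Fin 2 → ℝ} {c : ℝ}
    (hv : 0 ≤ v) (hvH : Matrix.vecMul v (Hmat B) ≤ -c • v) (ht : 0 ≤ t) :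
    v 0 * (U t).1 + v 1 * (U t).2 ≤ (v 0 * l.1 + v 1 * l.2) * Real.exp (-c * t) := by
  have hvH0 : v 0 * H11 B + v 1 * H21 B ≤ -c * v 0 := by
    simpa [Matrix.vecMul_eq_sum, Hmat] using hvH 0
  have hvH1 : v 0 * H12 B + v 1 * H22 B ≤ -c * v 1 := by
    simpa [Matrix.vecMul_eq_sum, Hmat] using hvH 1
  have h := le_mul_exp_of_hasDerivWithinAt_le (k := -c) (fun s hs =>
    ((hU.hasDerivWithinAt_fst hs).const_mul (v 0)).add
      ((hU.hasDerivWithinAt_snd hs).const_mul (v 1))) (fun s hs => ?_) ht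
  · simpa only [Pi.add_apply, hU.apply_zero] using h
  · have hs' := hU.nonneg hs
    calc v 0 * mPhi1 B (U s) + v 1 * mPhi2 B (U s)
        ≤ v 0 * (H11 B * (U s).1 + H12 B * (U s).2) +
          v 1 * (H21 B * (U s).1 + H22 B * (U s).2) :=
          add_le_add (mul_le_mul_of_nonneg_left (B.mPhi1_le hs') (hv 0))
            (mul_le_mul_of_nonneg_left (B.mPhi2_le hs') (hv 1))
      _ = (v 0 * H11 B + v 1 * H21 B) * (U s).1 + (v 0 * H12 B + v 1 * H22 B) * (U s).2 := by ring
      _ ≤ -c * v 0 * (U s).1 + -c * v 1 * (U s).2 :=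
          add_le_add (mul_le_mul_of_nonneg_right hvH0 hs'.1)
            (mul_le_mul_of_nonneg_right hvH1 hs'.2)
      _ = -c * (v 0 * (U s).1 + v 1 * (U s).2) := by ring

theorem exists_fst_add_snd_le_mul_exp (hU : SolvesCumulant B l U)
    (hspec : ∀ μ ∈ spectrum ℂ ((Hmat B).map (Complex.ofReal ·)), μ.re < 0) :
    ∃ C c : ℝ, 0 < c ∧ ∀ t, 0 ≤ t → (U t).1 + (U t).2 ≤ C * Real.exp (-c * t) := by
  obtain ⟨v, c, hc, hv, hvH⟩ :=
    exists_pos_vecMul_le_of_hurwitz (A := Hmat B) B.H12_nonneg B.H21_nonneg hspec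
  have hmin : 0 < min (v 0) (v 1) := lt_min (hv 0) (hv 1)
  refine ⟨(v 0 * l.1 + v 1 * l.2) / min (v 0) (v 1), c, hc, fun t ht => ?_⟩
  obtain ⟨hU1, hU2⟩ : 0 ≤ (U t).1 ∧ 0 ≤ (U t).2 := hU.nonneg ht
  rw [div_mul_eq_mul_div, le_div_iff₀' hmin]
  calc min (v 0) (v 1) * ((U t).1 + (U t).2) ≤ v 0 * (U t).1 + v 1 * (U t).2 := by
        rw [mul_add]
        gcongr
        exacts [min_le_left _ _, min_le_right _ _]
    _ ≤ _ := hU.weighted_sum_le_mul_exp (fun i => (hv i).le) hvH ht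

lemma exists_fst_add_snd_le (hU : SolvesCumulant B l U)
    (hspec : ∀ μ ∈ spectrum ℂ ((Hmat B).map (Complex.ofReal ·)), μ.re < 0) :
    ∃ M : ℝ, ∀ t, 0 ≤ t → (U t).1 + (U t).2 ≤ M := by
  obtain ⟨C, c, hc, hC⟩ := hU.exists_fst_add_snd_le_mul_exp hspec
  refine ⟨|C|, fun t ht => (hC t ht).trans ?_⟩
  have hexp : Real.exp (-c * t) ≤ 1 := Real.exp_le_one_iff.2 (by nlinarith)
  calc C * Real.exp (-c * t) ≤ |C| * Real.exp (-c * t) := by gcongr; exact le_abs_self C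
    _ ≤ |C| := mul_le_of_le_one_right (abs_nonneg C) hexp

theorem exists_mul_exp_le_of_bounded (hU : SolvesCumulant B l U) {M : ℝ}
    (hM : ∀ t, 0 ≤ t → (U t).1 + (U t).2 ≤ M) :
    ∃ K : ℝ, 0 < K ∧ ∀ t, 0 ≤ t →
      l.1 * Real.exp (-K * t) ≤ (U t).1 ∧ l.2 * Real.exp (-K * t) ≤ (U t).2 := by
  obtain ⟨K, hK, hΦ⟩ := B.exists_neg_mul_le_of_fst_add_snd_le M
  refine ⟨K, hK, fun t ht => ⟨?_, ?_⟩⟩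
  · simpa only [hU.apply_zero] using mul_exp_le_of_le_hasDerivWithinAt
      (fun s => hU.hasDerivWithinAt_fst) (fun s hs => (hΦ _ (hU.nonneg hs) (hM s hs)).1) ht
  · simpa only [hU.apply_zero] using mul_exp_le_of_le_hasDerivWithinAt
      (fun s => hU.hasDerivWithinAt_snd) (fun s hs => (hΦ _ (hU.nonneg hs) (hM s hs)).2) ht

end SolvesCumulant

/-! ### The immigration mechanism along an exponentially decaying path -/

section Immigration

variable {b : ℝ} {m : Measure (ℝ × ℝ)} {U : ℝ → ℝ × ℝ}

lemma integrable_min_one_fst_add_snd (hm : ∀ᵐ z ∂m, 0 ≤ z)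
    (hm_int : ∫⁻ z, ENNReal.ofReal (min 1 z.1 + min 1 z.2) ∂m ≠ ⊤) :
    Integrable (fun z => min 1 (z.1 + z.2)) m := by
  obtain ⟨h1, h2⟩ := integrable_and_integrable_of_lintegral_add_ne_top (by fun_prop) (by fun_prop)
    (hm.mono fun _ hz => le_min zero_le_one hz.1) (hm.mono fun _ hz => le_min zero_le_one hz.2)
    hm_int
  refine (h1.add h2).mono' (by fun_prop) (hm.mono fun z hz => ?_)
  obtain ⟨hz1, hz2⟩ : 0 ≤ z.1 ∧ 0 ≤ z.2 := hz
  rw [Real.norm_of_nonneg (le_min zero_le_one (add_nonneg hz1 hz2))]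
  simp only [Pi.add_apply]
  grind

lemma lintegral_posLog_sqrt_ne_top_iff (hm : ∀ᵐ z ∂m, 0 ≤ z)
    (hmin : Integrable (fun z => min 1 (z.1 + z.2)) m) :
    ∫⁻ z, ENNReal.ofReal (Real.posLog (Real.sqrt (z.1 ^ 2 + z.2 ^ 2))) ∂m ≠ ⊤ ↔
      ∫⁻ z, ENNReal.ofReal (Real.posLog (z.1 + z.2)) ∂m ≠ ⊤ := by
  have hsum : ∀ᵐ z ∂m, 0 ≤ z.1 + z.2 := hm.mono fun _ hz => add_nonneg hz.1 hz.2
  have hsqrt : ∀ᵐ z ∂m, 0 ≤ Real.sqrt (z.1 ^ 2 + z.2 ^ 2) :=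
    Eventually.of_forall fun _ => Real.sqrt_nonneg _
  have hle : ∀ᵐ z ∂m, Real.sqrt (z.1 ^ 2 + z.2 ^ 2) ≤ 1 * (z.1 + z.2) := by
    filter_upwards [hm] with z hz
    rw [one_mul]
    refine Real.sqrt_le_iff.2 ⟨add_nonneg hz.1 hz.2, ?_⟩
    linarith [add_sq z.1 z.2, mul_nonneg hz.1 hz.2]
  have hge (z : ℝ × ℝ) : z.1 + z.2 ≤ 2 * Real.sqrt (z.1 ^ 2 + z.2 ^ 2) := by
    have h1 := Real.abs_le_sqrt (le_add_of_nonneg_right (a := z.1 ^ 2) (sq_nonneg z.2))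
    have h2 := Real.abs_le_sqrt (le_add_of_nonneg_left (a := z.2 ^ 2) (sq_nonneg z.1))
    linarith [le_abs_self z.1, le_abs_self z.2]
  constructor
  · exact lintegral_posLog_ne_top_of_le_mul zero_le_two hsum hsqrt (Eventually.of_forall hge)
      (integrable_min_one_of_le_mul (by fun_prop) hsqrt hsum hle hmin)
  · exact lintegral_posLog_ne_top_of_le_mul zero_le_one hsqrt hsum hle hmin

lemma bernsteinKernel_le_mul_min {l z : ℝ × ℝ} (hl : 0 ≤ l) (hz : 0 ≤ z) :
    bernsteinKernel l z ≤ (1 + l.1 + l.2) * min 1 (z.1 + z.2) := by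
  obtain ⟨hl1, hl2⟩ : 0 ≤ l.1 ∧ 0 ≤ l.2 := hl
  obtain ⟨hz1, hz2⟩ : 0 ≤ z.1 ∧ 0 ≤ z.2 := hz
  rw [mul_min_of_nonneg _ _ (by positivity), mul_one]
  refine le_min ?_ (bernsteinKernel_le.trans ?_)
  · unfold bernsteinKernel
    linarith [Real.exp_pos (-(l.1 * z.1 + l.2 * z.2))]
  · nlinarith [mul_nonneg hl1 hz2, mul_nonneg hl2 hz1]

lemma ofReal_mPsi (hb : 0 ≤ b) (hm : ∀ᵐ z ∂m, 0 ≤ z)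
    (hmin : Integrable (fun z => min 1 (z.1 + z.2)) m) {l : ℝ × ℝ} (hl : 0 ≤ l) :
    ENNReal.ofReal (mPsi b m l) =
      ENNReal.ofReal (b * l.1) + ∫⁻ z, ENNReal.ofReal (bernsteinKernel l z) ∂m := by
  have hnonneg : ∀ᵐ z ∂m, 0 ≤ bernsteinKernel l z := hm.mono fun _ => bernsteinKernel_nonneg hl
  have h_int : Integrable (bernsteinKernel l) m := by
    refine (hmin.const_mul (1 + l.1 + l.2)).mono' (by fun_prop) ?_
    filter_upwards [hm, hnonneg] with z hz hz0
    exact (Real.norm_of_nonneg hz0).trans_le (bernsteinKernel_le_mul_min hl hz)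
  rw [← ofReal_integral_eq_lintegral_ofReal h_int hnonneg,
    ← ENNReal.ofReal_add (mul_nonneg hb hl.1) (integral_nonneg_of_ae hnonneg)]
  rfl

theorem lintegral_mPsi_ne_top_of_le_mul_exp [SFinite m] (hb : 0 ≤ b) (hm : ∀ᵐ z ∂m, 0 ≤ z)
    (hmin : Integrable (fun z => min 1 (z.1 + z.2)) m) {C c : ℝ} (hc : 0 < c)
    (hU0 : ∀ s, 0 ≤ s → 0 ≤ U s)
    (hU : ∀ s, 0 ≤ s → (U s).1 + (U s).2 ≤ C * Real.exp (-c * s))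
    (hlog : ∫⁻ z, ENNReal.ofReal (Real.posLog (z.1 + z.2)) ∂m ≠ ⊤) :
    ∫⁻ s in Ioi (0 : ℝ), ENNReal.ofReal (mPsi b m (U s)) ≠ ⊤ := by
  have hsum : ∀ᵐ z ∂m, 0 ≤ z.1 + z.2 := hm.mono fun _ hz => add_nonneg hz.1 hz.2
  have hC : 0 ≤ C := by
    have h0 := hU 0 le_rfl
    rw [mul_zero, Real.exp_zero, mul_one] at h0
    exact (add_nonneg (hU0 0 le_rfl).1 (hU0 0 le_rfl).2).trans h0
  have hpath : ∀ s ∈ Ioi (0 : ℝ), ENNReal.ofReal (mPsi b m (U s)) ≤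
      ENNReal.ofReal (b * C * Real.exp (-c * s)) +
        ∫⁻ z, ENNReal.ofReal (1 - Real.exp (-(Real.exp (-c * s) * (C * (z.1 + z.2))))) ∂m := by
    intro s (hs : 0 < s)
    obtain ⟨hU1, hU2⟩ : 0 ≤ (U s).1 ∧ 0 ≤ (U s).2 := hU0 s hs.le
    have hUs := hU s hs.le
    rw [ofReal_mPsi hb hm hmin (hU0 s hs.le), mul_assoc]
    refine add_le_add (by gcongr; linarith)
      (lintegral_mono_ae (hm.mono fun z ⟨hz1, hz2⟩ => ENNReal.ofReal_le_ofReal ?_))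
    have hdual : (U s).1 * z.1 + (U s).2 * z.2 ≤ Real.exp (-c * s) * (C * (z.1 + z.2)) := by
      have h1 : (U s).1 * z.1 ≤ C * Real.exp (-c * s) * z.1 :=
        mul_le_mul_of_nonneg_right (by linarith) hz1
      have h2 : (U s).2 * z.2 ≤ C * Real.exp (-c * s) * z.2 :=
        mul_le_mul_of_nonneg_right (by linarith) hz2
      linarith
    unfold bernsteinKernel
    gcongr
  refine ne_top_of_le_ne_top ?_ (setLIntegral_mono' measurableSet_Ioi hpath)
  rw [lintegral_add_left (by fun_prop)]
  refine ENNReal.add_ne_top.2 ⟨?_, ?_⟩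
  · exact ((integrableOn_exp_mul_Ioi (neg_lt_zero.2 hc) 0).const_mul (b * C)).lintegral_lt_top.ne
  · have hCsum : ∀ᵐ z ∂m, 0 ≤ C * (z.1 + z.2) := hsum.mono fun _ => mul_nonneg hC
    have hle : ∀ᵐ z ∂m, C * (z.1 + z.2) ≤ C * (z.1 + z.2) := Eventually.of_forall fun _ => le_rfl
    exact (lintegral_lintegral_one_sub_exp_ne_top_iff hc (by fun_prop) hCsum
      (integrable_min_one_of_le_mul (by fun_prop) hCsum hsum hle hmin)).2
      (lintegral_posLog_ne_top_of_le_mul hC hCsum hsum hle hmin hlog)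

theorem lintegral_posLog_ne_top_of_exp_le [SFinite m] (hb : 0 ≤ b) (hm : ∀ᵐ z ∂m, 0 ≤ z)
    (hmin : Integrable (fun z => min 1 (z.1 + z.2)) m) {K : ℝ} (hK : 0 < K)
    (hU : ∀ s, 0 ≤ s → Real.exp (-K * s) ≤ (U s).1 ∧ Real.exp (-K * s) ≤ (U s).2)
    (hfin : ∫⁻ s in Ioi (0 : ℝ), ENNReal.ofReal (mPsi b m (U s)) ≠ ⊤) :
    ∫⁻ z, ENNReal.ofReal (Real.posLog (z.1 + z.2)) ∂m ≠ ⊤ := by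
  refine (lintegral_lintegral_one_sub_exp_ne_top_iff hK (by fun_prop)
    (hm.mono fun _ hz => add_nonneg hz.1 hz.2) hmin).1
    (ne_top_of_le_ne_top hfin (setLIntegral_mono' measurableSet_Ioi fun s (hs : 0 < s) => ?_))
  obtain ⟨hU1, hU2⟩ := hU s hs.le
  have hU0 : 0 ≤ U s := ⟨(Real.exp_pos _).le.trans hU1, (Real.exp_pos _).le.trans hU2⟩
  rw [ofReal_mPsi hb hm hmin hU0]
  refine le_add_of_nonneg_of_le zero_le
    (lintegral_mono_ae (hm.mono fun z ⟨hz1, hz2⟩ => ENNReal.ofReal_le_ofReal ?_))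
  unfold bernsteinKernel
  rw [mul_add]
  gcongr

end Immigration

theorem stationary_distribution_condition_general (B : BranchingMechanism)
    (V : ℝ → (ℝ × ℝ) → ℝ × ℝ)
    (hV : ∀ l : ℝ × ℝ, 0 ≤ l.1 → 0 ≤ l.2 → SolvesCumulant B l (fun t => V t l))
    (hspec : ∀ μ : ℂ, μ ∈ spectrum ℂ ((Hmat B).map (Complex.ofReal ·)) → μ.re < 0)
    (b : ℝ) (hb : 0 ≤ b) (m : Measure (ℝ × ℝ)) [SFinite m] (hm : ∀ᵐ z ∂m, 0 ≤ z)
    (hm_int : ∫⁻ z, ENNReal.ofReal (min 1 z.1 + min 1 z.2) ∂m ≠ ⊤) :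
    (∀ l : ℝ × ℝ, 0 ≤ l.1 → 0 ≤ l.2 →
        ∫⁻ s in Ioi (0 : ℝ), ENNReal.ofReal (mPsi b m (V s l)) ≠ ⊤) ↔
      ∫⁻ z in {z : ℝ × ℝ | 1 ≤ Real.sqrt (z.1 ^ 2 + z.2 ^ 2)},
          ENNReal.ofReal (Real.log (Real.sqrt (z.1 ^ 2 + z.2 ^ 2))) ∂m ≠ ⊤ := by
  have hmin := integrable_min_one_fst_add_snd hm hm_int
  rw [setLIntegral_log_eq_lintegral_posLog (by fun_prop) fun _ => Real.sqrt_nonneg _,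
    lintegral_posLog_sqrt_ne_top_iff hm hmin]
  constructor
  · intro hfin
    have hsol := hV (1, 1) zero_le_one zero_le_one
    obtain ⟨M, hM⟩ := hsol.exists_fst_add_snd_le hspec
    obtain ⟨K, hK, hlow⟩ := hsol.exists_mul_exp_le_of_bounded hM
    exact lintegral_posLog_ne_top_of_exp_le hb hm hmin hK (by simpa using hlow)
      (hfin (1, 1) zero_le_one zero_le_one)
  · intro hlog l hl1 hl2
    have hsol := hV l hl1 hl2
    obtain ⟨C, c, hc, hup⟩ := hsol.exists_fst_add_snd_le_mul_exp hspec
    exact lintegral_mPsi_ne_top_of_le_mul_exp hb hm hmin hc (fun s => hsol.nonneg) hup hlog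

/-- Suppose all eigenvalues of `H` have strictly negative real parts,
and let `Ψ` be an immigration mechanism with measure `m`. Then
`∫₀^∞ Ψ(V(s,λ)) ds < ∞` for every `λ ∈ [0,∞)²` if and only if
`∫_{|z|≥1} log |z| m(dz) < ∞` — the condition for existence of a stationary
distribution of the MSBI-process. -/
theorem stationary_distribution_condition (B : BranchingMechanism)
    (V : ℝ → (ℝ × ℝ) → ℝ × ℝ)
    (hV : ∀ l : ℝ × ℝ, 0 ≤ l.1 → 0 ≤ l.2 → SolvesCumulant B l (fun t => V t l))
    (hspec : ∀ μ : ℂ, μ ∈ spectrum ℂ ((Hmat B).map (Complex.ofReal ·)) → μ.re < 0)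
    (b : ℝ) (hb : 0 < b) (m : Measure (ℝ × ℝ))
    (hm_sf : SigmaFinite m) (hm_supp : m Msetᶜ = 0) (hm_zero : m {0} = 0)
    (hm_int : ∫⁻ z, ENNReal.ofReal (min 1 z.1 + min 1 z.2) ∂m ≠ ⊤) :
    (∀ l : ℝ × ℝ, 0 ≤ l.1 → 0 ≤ l.2 →
        ∫⁻ s in Ioi (0:ℝ), ENNReal.ofReal (mPsi b m (V s l)) ≠ ⊤) ↔
      ∫⁻ z in {z : ℝ × ℝ | 1 ≤ Real.sqrt (z.1 ^ 2 + z.2 ^ 2)},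
          ENNReal.ofReal (Real.log (Real.sqrt (z.1 ^ 2 + z.2 ^ 2))) ∂m ≠ ⊤ := by
  exact stationary_distribution_condition_general B V hV hspec b hb.le m
    (Eventually.mono (mem_ae_iff.2 hm_supp) fun _ => nonneg_of_mem_Mset) hm_int
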